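/- Let X satisfy P(X = s·r^(k−1)) = p·q^(k−1) for k ≥ 1, with 0 < p < 1, q = 1 − p, s > 0, r > 1, and r·q ≥ 1. Then for all x ≥ s, P(X > x) ≥ s/(r·x). -/

import Mathlib

open MeasureTheory ProbabilityTheory Filter

/-! If `s * r ^ n ≤ x < s * r ^ (n + 1)`, then every atom `s * r ^ k` with `n < k` lies above `x`,
and these atoms have total mass `q ^ (n + 1)`. Since `r⁻¹ ≤ q`, this is at least
`r⁻¹ ^ (n + 1) = s / (r * (s * r ^ n))`, which is at least `s / (r * x)`. -/

theorem hasSum_geometric_tail {p : ℝ} (hp : 0 < p) (hp1 : p ≤ 1) (n : ℕ) :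
    HasSum (fun k : ℕ ↦ p * (1 - p) ^ (n + k)) ((1 - p) ^ n) := by
  have hgeom := hasSum_geometric_of_lt_one (sub_nonneg.2 hp1) (sub_lt_self 1 hp)
  convert! hgeom.mul_left (p * (1 - p) ^ n) using 1
  · simp only [pow_add, mul_assoc]
  · rw [sub_sub_cancel, mul_right_comm, mul_inv_cancel₀ hp.ne', one_mul]

theorem tsum_measure_singleton_le {ι α : Type*} [MeasurableSpace α] [MeasurableSingletonClass α]
    (ν : Measure α) {a : ι → α} (ha : Function.Injective a) {S : Set α} (haS : ∀ i, a i ∈ S) :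
    ∑' i, ν {a i} ≤ ν S :=
  calc ∑' i, ν {a i} ≤ ν (⋃ i, {a i}) :=
        tsum_meas_le_meas_iUnion_of_disjoint ν (fun i ↦ measurableSet_singleton (a i))
          fun _ _ hij ↦ Set.disjoint_singleton.2 (ha.ne hij)
    _ ≤ ν S := measure_mono <| Set.iUnion_subset fun i ↦ Set.singleton_subset_iff.2 (haS i)

theorem ofReal_one_sub_pow_le_measure_Ioi {α : Type*} [Preorder α] [MeasurableSpace α]
    [MeasurableSingletonClass α] {ν : Measure α} {a : ℕ → α} (ha : StrictMono a) {p : ℝ}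
    (hp : 0 < p) (hp1 : p ≤ 1) (hν : ∀ k, ENNReal.ofReal (p * (1 - p) ^ k) ≤ ν {a k})
    {x : α} {n : ℕ} (hx : x < a n) :
    ENNReal.ofReal ((1 - p) ^ n) ≤ ν (Set.Ioi x) := by
  have hsum := hasSum_geometric_tail hp hp1 n
  have hnonneg (k : ℕ) : 0 ≤ p * (1 - p) ^ (n + k) :=
    mul_nonneg hp.le (pow_nonneg (sub_nonneg.2 hp1) _)
  calc ENNReal.ofReal ((1 - p) ^ n)
      = ∑' k, ENNReal.ofReal (p * (1 - p) ^ (n + k)) := by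
        rw [← hsum.tsum_eq, ENNReal.ofReal_tsum_of_nonneg hnonneg hsum.summable]
    _ ≤ ∑' k, ν {a (n + k)} := ENNReal.tsum_le_tsum fun k ↦ hν (n + k)
    _ ≤ ν (Set.Ioi x) :=
        tsum_measure_singleton_le ν (ha.injective.comp (add_right_injective n))
          fun k ↦ hx.trans_le (ha.monotone (Nat.le_add_right n k))

theorem exists_mul_pow_le_and_lt_mul_pow_succ {K : Type*} [Field K] [LinearOrder K]
    [IsStrictOrderedRing K] [Archimedean K] {s r x : K} (hs : 0 < s) (hr : 1 < r) (hx : s ≤ x) :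
    ∃ n : ℕ, s * r ^ n ≤ x ∧ x < s * r ^ (n + 1) := by
  simpa only [le_div_iff₀' hs, div_lt_iff₀' hs] using
    exists_nat_pow_near ((one_le_div hs).2 hx) hr

theorem div_mul_le_pow_succ {K : Type*} [Field K] [LinearOrder K] [IsStrictOrderedRing K]
    {s r q x : K} {n : ℕ} (hs : 0 < s) (hr : 0 < r) (hrq : 1 ≤ r * q) (hx : s * r ^ n ≤ x) :
    s / (r * x) ≤ q ^ (n + 1) :=
  calc s / (r * x) ≤ s / (r * (s * r ^ n)) := by gcongr
    _ = r⁻¹ ^ (n + 1) := by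
        rw [inv_pow, pow_succ]
        field_simp
    _ ≤ q ^ (n + 1) := by
        gcongr
        exact (inv_le_iff_one_le_mul₀' hr).2 hrq

theorem petersburg_tail_lower_bound_general {ν : Measure ℝ} {p s r : ℝ} (hp : 0 < p) (hs : 0 < s)
    (hr : 1 < r) (hrp : 1 ≤ r * (1 - p))
    (hν : ∀ k : ℕ, ENNReal.ofReal (p * (1 - p) ^ k) ≤ ν {s * r ^ k}) {x : ℝ} (hx : s ≤ x) :
    ENNReal.ofReal (s / (r * x)) ≤ ν (Set.Ioi x) := by
  have hr0 : 0 < r := one_pos.trans hr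
  have hp1 : p ≤ 1 := sub_nonneg.1 (pos_of_mul_pos_right (one_pos.trans_le hrp) hr0.le).le
  have hatoms : StrictMono fun k : ℕ ↦ s * r ^ k := (pow_right_strictMono₀ hr).const_mul hs
  obtain ⟨n, hnx, hxn⟩ := exists_mul_pow_le_and_lt_mul_pow_succ hs hr hx
  calc ENNReal.ofReal (s / (r * x))
      ≤ ENNReal.ofReal ((1 - p) ^ (n + 1)) :=
        ENNReal.ofReal_le_ofReal (div_mul_le_pow_succ hs hr0 hrp hnx)
    _ ≤ ν (Set.Ioi x) := ofReal_one_sub_pow_le_measure_Ioi hatoms hp hp1 hν hxn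

theorem petersburg_tail_lower_bound
    {Ω : Type*} [MeasureSpace Ω] [IsProbabilityMeasure (ℙ : Measure Ω)]
    (X : Ω → ℝ) (hX : Measurable X) (p q s r : ℝ)
    (hp : 0 < p) (hp1 : p < 1) (hq : q = 1 - p) (hs : 0 < s) (hr : 1 < r)
    (hrq : 1 ≤ r * q)
    (hlaw : ∀ k : ℕ, ℙ {ω | X ω = s * r ^ k} = ENNReal.ofReal (p * q ^ k)) :
    ∀ x : ℝ, s ≤ x → ENNReal.ofReal (s / (r * x)) ≤ ℙ {ω | X ω > x} := by
  subst hq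
  intro x hx
  have hatom (k : ℕ) : ENNReal.ofReal (p * (1 - p) ^ k) ≤ (ℙ : Measure Ω).map X {s * r ^ k} :=
    ((Measure.map_apply hX (measurableSet_singleton _)).trans (hlaw k)).ge
  have htail := petersburg_tail_lower_bound_general hp hs hr hrq hatom hx
  rwa [Measure.map_apply hX measurableSet_Ioi] at htail
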